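/- For triples (D,η,η̃), (E,ζ,ζ̃), (F,ξ,ξ̃) satisfying the commutation condition, the associator α_{D,E,F} : (D⊗E)⊗F → D⊗(E⊗F) of M intertwines the iterated tensor-product actions: α_{D,E,F}∘T(T(η,ζ),ξ) = T(η,T(ζ,ξ))∘(id_X⊗α_{D,E,F}) and α_{D,E,F}∘T̃(T̃(η̃,ζ̃),ξ̃) = T̃(η̃,T̃(ζ̃,ξ̃))∘(α_{D,E,F}⊗id_Y). In other words, the associator of M is a morphism ((D,η,η̃)⊛(E,ζ,ζ̃))⊛(F,ξ,ξ̃) → (D,η,η̃)⊛((E,ζ,ζ̃)⊛(F,ξ,ξ̃)) in M_ω. -/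

import Mathlib

open CategoryTheory MonoidalCategory

variable {M : Type*} [Category M] [MonoidalCategory M]
  [Preadditive M] [CategoryTheory.Linear ℂ M]
  [MonoidalPreadditive M] [MonoidalLinear ℂ M]

/-- The commutation condition for a triple `(D, η, η̃)` relative to objects `(X, γ)` and
`(Y, δ)` of the Drinfeld center of `M` and a pairing `ω : X ⊗ Y ⟶ 𝟙`.  As morphisms
`(X ⊗ D) ⊗ Y ⟶ D` (with all associators and unitors written out):
`(id_D ⊗ ω)∘(γ_D ⊗ id_Y) − (ω ⊗ id_D)∘(id_X ⊗ δ_D⁻¹) = η̃∘(η ⊗ id_Y) − η∘(id_X ⊗ η̃)`. -/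
def CommCond (X Y : Center M) (ω : X.1 ⊗ Y.1 ⟶ 𝟙_ M)
    (D : M) (η : X.1 ⊗ D ⟶ D) (η' : D ⊗ Y.1 ⟶ D) : Prop :=
  ((X.2.β D).hom ▷ Y.1) ≫ (α_ D X.1 Y.1).hom ≫ (D ◁ ω) ≫ (ρ_ D).hom
      - (α_ X.1 D Y.1).hom ≫ (X.1 ◁ (Y.2.β D).inv) ≫ (α_ X.1 Y.1 D).inv
          ≫ (ω ▷ D) ≫ (λ_ D).hom
    = (η ▷ Y.1) ≫ η' - (α_ X.1 D Y.1).hom ≫ (X.1 ◁ η') ≫ η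

/-- The left action `T(η, ζ) : X ⊗ (D ⊗ E) ⟶ D ⊗ E` on a tensor product of two triples:
`T(η,ζ) = (η ⊗ id_E) + (id_D ⊗ ζ)∘(γ_D ⊗ id_E)` (with associators written out). -/
def Tact (X : Center M) {D E : M} (η : X.1 ⊗ D ⟶ D) (ζ : X.1 ⊗ E ⟶ E) :
    X.1 ⊗ (D ⊗ E) ⟶ D ⊗ E :=
  (α_ X.1 D E).inv ≫ (η ▷ E)
    + (α_ X.1 D E).inv ≫ ((X.2.β D).hom ▷ E) ≫ (α_ D X.1 E).hom ≫ (D ◁ ζ)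

/-- The right action `T̃(η̃, ζ̃) : (D ⊗ E) ⊗ Y ⟶ D ⊗ E` on a tensor product of two triples:
`T̃(η̃,ζ̃) = (id_D ⊗ ζ̃) + (η̃ ⊗ id_E)∘(id_D ⊗ δ_E⁻¹)` (with associators written out). -/
def Tact' (Y : Center M) {D E : M} (η' : D ⊗ Y.1 ⟶ D) (ζ' : E ⊗ Y.1 ⟶ E) :
    (D ⊗ E) ⊗ Y.1 ⟶ D ⊗ E :=
  (α_ D E Y.1).hom ≫ (D ◁ ζ')
    + (α_ D E Y.1).hom ≫ (D ◁ (Y.2.β E).inv) ≫ (α_ D Y.1 E).inv ≫ (η' ▷ E)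

/-!
By biadditivity each iterated action is a sum of three terms, one for each tensor factor: carry `X`
(or `Y`) past the factors in between and let it act there. The associator matches the two sums term
by term. Two of the three comparisons are pure coherence; only the one in which `X` (or `Y`) crosses
two factors needs a property of the half-braiding, its compatibility with `⊗`.
-/

section FactorActions

variable {C : Type*} [Category C] [MonoidalCategory C] {X Y : C}

theorem halfBraiding_inv_tensor (c : HalfBraiding Y) (D E : C) :
    (c.β (D ⊗ E)).inv =
      (α_ D E Y).hom ≫ D ◁ (c.β E).inv ≫ (α_ D Y E).inv ≫ (c.β D).inv ▷ E ≫
        (α_ Y D E).hom := by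
  rw [← cancel_epi (c.β (D ⊗ E)).hom, Iso.hom_inv_id, c.monoidal]
  simp

/-- The action of `X` on `D ⊗ E` through an action on the first factor: the first summand of
`T(η, ζ)`. -/
def leftActionFst {D : C} (η : X ⊗ D ⟶ D) (E : C) : X ⊗ (D ⊗ E) ⟶ D ⊗ E :=
  (α_ X D E).inv ≫ η ▷ E

/-- The action of `X` on `D ⊗ E` through an action on the second factor, which `X` reaches by
crossing `D` with the half-braiding: the second summand of `T(η, ζ)`. -/
def leftActionSnd (b : HalfBraiding X) (D : C) {E : C} (ζ : X ⊗ E ⟶ E) :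
    X ⊗ (D ⊗ E) ⟶ D ⊗ E :=
  (α_ X D E).inv ≫ (b.β D).hom ▷ E ≫ (α_ D X E).hom ≫ D ◁ ζ

/-- The action of `Y` on `D ⊗ E` through an action on the second factor: the first summand of
`T̃(η̃, ζ̃)`. -/
def rightActionSnd (D : C) {E : C} (ζ : E ⊗ Y ⟶ E) : (D ⊗ E) ⊗ Y ⟶ D ⊗ E :=
  (α_ D E Y).hom ≫ D ◁ ζ

/-- The action of `Y` on `D ⊗ E` through an action on the first factor, which `Y` reaches by
crossing `E` with the inverse half-braiding: the second summand of `T̃(η̃, ζ̃)`. -/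
def rightActionFst (c : HalfBraiding Y) {D : C} (η : D ⊗ Y ⟶ D) (E : C) :
    (D ⊗ E) ⊗ Y ⟶ D ⊗ E :=
  (α_ D E Y).hom ≫ D ◁ (c.β E).inv ≫ (α_ D Y E).inv ≫ η ▷ E

theorem leftActionFst_leftActionFst_comp_associator {D : C} (η : X ⊗ D ⟶ D) (E F : C) :
    leftActionFst (leftActionFst η E) F ≫ (α_ D E F).hom =
      X ◁ (α_ D E F).hom ≫ leftActionFst η (E ⊗ F) := by
  simp only [leftActionFst]
  monoidal

theorem leftActionFst_leftActionSnd_comp_associator (b : HalfBraiding X) (D : C) {E : C}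
    (ζ : X ⊗ E ⟶ E) (F : C) :
    leftActionFst (leftActionSnd b D ζ) F ≫ (α_ D E F).hom =
      X ◁ (α_ D E F).hom ≫ leftActionSnd b D (leftActionFst ζ F) := by
  simp only [leftActionFst, leftActionSnd]
  monoidal

theorem leftActionSnd_tensor_comp_associator (b : HalfBraiding X) (D E : C) {F : C}
    (ξ : X ⊗ F ⟶ F) :
    leftActionSnd b (D ⊗ E) ξ ≫ (α_ D E F).hom =
      X ◁ (α_ D E F).hom ≫ leftActionSnd b D (leftActionSnd b E ξ) := by
  simp only [leftActionSnd, b.monoidal]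
  monoidal

theorem rightActionSnd_tensor_comp_associator (D E : C) {F : C} (ξ : F ⊗ Y ⟶ F) :
    rightActionSnd (D ⊗ E) ξ ≫ (α_ D E F).hom =
      (α_ D E F).hom ▷ Y ≫ rightActionSnd D (rightActionSnd E ξ) := by
  simp only [rightActionSnd]
  monoidal

theorem rightActionFst_rightActionSnd_comp_associator (c : HalfBraiding Y) (D : C) {E : C}
    (ζ : E ⊗ Y ⟶ E) (F : C) :
    rightActionFst c (rightActionSnd D ζ) F ≫ (α_ D E F).hom =
      (α_ D E F).hom ▷ Y ≫ rightActionSnd D (rightActionFst c ζ F) := by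
  simp only [rightActionFst, rightActionSnd]
  monoidal

theorem rightActionFst_rightActionFst_comp_associator (c : HalfBraiding Y) {D : C}
    (η : D ⊗ Y ⟶ D) (E F : C) :
    rightActionFst c (rightActionFst c η E) F ≫ (α_ D E F).hom =
      (α_ D E F).hom ▷ Y ≫ rightActionFst c η (E ⊗ F) := by
  simp only [rightActionFst, halfBraiding_inv_tensor]
  monoidal

end FactorActions

section TensorActions

variable {C : Type*} [Category C] [MonoidalCategory C] [Preadditive C]

theorem tact_eq_add (X : Center C) {D E : C} (η : X.1 ⊗ D ⟶ D) (ζ : X.1 ⊗ E ⟶ E) :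
    Tact X η ζ = leftActionFst η E + leftActionSnd X.2 D ζ :=
  rfl

theorem tact'_eq_add (Y : Center C) {D E : C} (η : D ⊗ Y.1 ⟶ D) (ζ : E ⊗ Y.1 ⟶ E) :
    Tact' Y η ζ = rightActionSnd D ζ + rightActionFst Y.2 η E :=
  rfl

variable [MonoidalPreadditive C]

theorem leftActionFst_add {X D : C} (η₁ η₂ : X ⊗ D ⟶ D) (E : C) :
    leftActionFst (η₁ + η₂) E = leftActionFst η₁ E + leftActionFst η₂ E := by
  simp only [leftActionFst, MonoidalPreadditive.add_whiskerRight, Preadditive.comp_add]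

theorem leftActionSnd_add {X : C} (b : HalfBraiding X) (D : C) {E : C} (ζ₁ ζ₂ : X ⊗ E ⟶ E) :
    leftActionSnd b D (ζ₁ + ζ₂) = leftActionSnd b D ζ₁ + leftActionSnd b D ζ₂ := by
  simp only [leftActionSnd, MonoidalPreadditive.whiskerLeft_add, Preadditive.comp_add]

theorem rightActionSnd_add {Y : C} (D : C) {E : C} (ζ₁ ζ₂ : E ⊗ Y ⟶ E) :
    rightActionSnd D (ζ₁ + ζ₂) = rightActionSnd D ζ₁ + rightActionSnd D ζ₂ := by
  simp only [rightActionSnd, MonoidalPreadditive.whiskerLeft_add, Preadditive.comp_add]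

theorem rightActionFst_add {Y : C} (c : HalfBraiding Y) {D : C} (η₁ η₂ : D ⊗ Y ⟶ D) (E : C) :
    rightActionFst c (η₁ + η₂) E = rightActionFst c η₁ E + rightActionFst c η₂ E := by
  simp only [rightActionFst, MonoidalPreadditive.add_whiskerRight, Preadditive.comp_add]

theorem tact_comp_associator (X : Center C) {D E F : C}
    (η : X.1 ⊗ D ⟶ D) (ζ : X.1 ⊗ E ⟶ E) (ξ : X.1 ⊗ F ⟶ F) :
    Tact X (Tact X η ζ) ξ ≫ (α_ D E F).hom =
      X.1 ◁ (α_ D E F).hom ≫ Tact X η (Tact X ζ ξ) := by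
  simp only [tact_eq_add, leftActionFst_add, leftActionSnd_add, Preadditive.add_comp,
    Preadditive.comp_add, leftActionFst_leftActionFst_comp_associator,
    leftActionFst_leftActionSnd_comp_associator, leftActionSnd_tensor_comp_associator, add_assoc]

theorem tact'_comp_associator (Y : Center C) {D E F : C}
    (η : D ⊗ Y.1 ⟶ D) (ζ : E ⊗ Y.1 ⟶ E) (ξ : F ⊗ Y.1 ⟶ F) :
    Tact' Y (Tact' Y η ζ) ξ ≫ (α_ D E F).hom =
      (α_ D E F).hom ▷ Y.1 ≫ Tact' Y η (Tact' Y ζ ξ) := by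
  simp only [tact'_eq_add, rightActionFst_add, rightActionSnd_add, Preadditive.add_comp,
    Preadditive.comp_add, rightActionSnd_tensor_comp_associator,
    rightActionFst_rightActionSnd_comp_associator, rightActionFst_rightActionFst_comp_associator,
    add_assoc]

theorem associator_is_Momega_morphism_general (X Y : Center C) {D E F : C}
    (η : X.1 ⊗ D ⟶ D) (η' : D ⊗ Y.1 ⟶ D) (ζ : X.1 ⊗ E ⟶ E) (ζ' : E ⊗ Y.1 ⟶ E)
    (ξ : X.1 ⊗ F ⟶ F) (ξ' : F ⊗ Y.1 ⟶ F) :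
    Tact X (Tact X η ζ) ξ ≫ (α_ D E F).hom =
        X.1 ◁ (α_ D E F).hom ≫ Tact X η (Tact X ζ ξ) ∧
      Tact' Y (Tact' Y η' ζ') ξ' ≫ (α_ D E F).hom =
        (α_ D E F).hom ▷ Y.1 ≫ Tact' Y η' (Tact' Y ζ' ξ') :=
  ⟨tact_comp_associator X η ζ ξ, tact'_comp_associator Y η' ζ' ξ'⟩

end TensorActions

/-- For triples `(D,η,η̃)`, `(E,ζ,ζ̃)`, `(F,ξ,ξ̃)` satisfying the commutation condition, the
associator `α_{D,E,F}` of `M` intertwines the iterated tensor-product actions: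
`α∘T(T(η,ζ),ξ) = T(η,T(ζ,ξ))∘(id_X ⊗ α)` and
`α∘T̃(T̃(η̃,ζ̃),ξ̃) = T̃(η̃,T̃(ζ̃,ξ̃))∘(α ⊗ id_Y)`; i.e. the associator is a morphism
`((D,η,η̃)⊛(E,ζ,ζ̃))⊛(F,ξ,ξ̃) ⟶ (D,η,η̃)⊛((E,ζ,ζ̃)⊛(F,ξ,ξ̃))` in `M_ω`. -/
theorem associator_is_Momega_morphism (X Y : Center M) (ω : X.1 ⊗ Y.1 ⟶ 𝟙_ M)
    (D E F : M) (η : X.1 ⊗ D ⟶ D) (η' : D ⊗ Y.1 ⟶ D)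
    (ζ : X.1 ⊗ E ⟶ E) (ζ' : E ⊗ Y.1 ⟶ E)
    (ξ : X.1 ⊗ F ⟶ F) (ξ' : F ⊗ Y.1 ⟶ F)
    (hD : CommCond X Y ω D η η') (hE : CommCond X Y ω E ζ ζ')
    (hF : CommCond X Y ω F ξ ξ') :
    Tact X (Tact X η ζ) ξ ≫ (α_ D E F).hom
        = (X.1 ◁ (α_ D E F).hom) ≫ Tact X η (Tact X ζ ξ) ∧
    Tact' Y (Tact' Y η' ζ') ξ' ≫ (α_ D E F).hom
        = ((α_ D E F).hom ▷ Y.1) ≫ Tact' Y η' (Tact' Y ζ' ξ') :=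
  associator_is_Momega_morphism_general X Y η η' ζ ζ' ξ ξ'
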